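/- arXiv:0811.2476 — 2 statements merged into one kernel-verified Lean document; each statement's English description precedes it below -/
import Mathlib

section
/- The PF-D0 coefficient function b3 satisfies lim_{v→0⁺} b3(v) = 270875723/17740800 and lim_{v→0⁺} (b3(v) − 270875723/17740800)/v² = −16301796103/6457651200; in particular b3 tends to the corresponding coefficient of the classical Quinlan–Tremaine method as v → 0. -/
open Filter

/-- The variable coefficient `b₁(v)` of the phase-fitted method PF-D0. -/
noncomputable def pfb1 (v : ℝ) : ℝ :=
  (((-124184636) * Real.cos v + 70378348 * Real.cos (2 * v) - 24862148 * Real.cos (3 * v)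
        + 5153611 * Real.cos (4 * v)) * v ^ 2
      + 25 * (3013169 * v ^ 2 - 16128 * Real.cos (3 * v) + 32256 * Real.cos (4 * v)
        - 32256 * Real.cos (5 * v) + 16128 * Real.cos (6 * v)))
    / (206438400 * v ^ 2 * (Real.sin (v / 2)) ^ 10)

/-- The variable coefficient `b₂(v)` of the phase-fitted method PF-D0. -/
noncomputable def pfb2 (v : ℝ) : ℝ :=
  (v ^ 2 * (159588050 * Real.cos v - 85350160 * Real.cos (2 * v)
        + 16708985 * Real.cos (3 * v) - 5153611 * Real.cos (5 * v))
      - 16 * (6496079 * v ^ 2 - 252000 * Real.cos (3 * v) + 504000 * Real.cos (4 * v)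
        - 504000 * Real.cos (5 * v) + 252000 * Real.cos (6 * v)))
    / (206438400 * v ^ 2 * (Real.sin (v / 2)) ^ 10)

/-- The variable coefficient `b₃(v)` of the phase-fitted method PF-D0. -/
noncomputable def pfb3 (v : ℝ) : ℝ :=
  (((-367257540) * Real.cos v + 183567900 * Real.cos (2 * v)
        - 16708985 * Real.cos (4 * v) + 24862148 * Real.cos (5 * v)) * v ^ 2
      + 81 * (3175117 * v ^ 2 - 224000 * Real.cos (3 * v) + 448000 * Real.cos (4 * v)
        - 448000 * Real.cos (5 * v) + 224000 * Real.cos (6 * v)))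
    / (206438400 * v ^ 2 * (Real.sin (v / 2)) ^ 10)

/-- The variable coefficient `b₄(v)` of the phase-fitted method PF-D0. -/
noncomputable def pfb4 (v : ℝ) : ℝ :=
  (30675810 * v ^ 2 * Real.cos v - 42958788 * v ^ 2
      + 75 * (161280 - 611893 * v ^ 2) * Real.cos (3 * v)
      + 140 * (152411 * v ^ 2 - 172800) * Real.cos (4 * v)
      + (24192000 - 17594587 * v ^ 2) * Real.cos (5 * v)
      - 12096000 * Real.cos (6 * v))
    / (51609600 * v ^ 2 * (Real.sin (v / 2)) ^ 10)

/-- The variable coefficient `b₅(v)` of the phase-fitted method PF-D0. -/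
noncomputable def pfb5 (v : ℝ) : ℝ :=
  ((-61351620) * v ^ 2 * Real.cos (2 * v) + 85936557 * v ^ 2
      + 30 * (6120959 * v ^ 2 - 1411200) * Real.cos (3 * v)
      + 25 * (3386880 - 3191761 * v ^ 2) * Real.cos (4 * v)
      + (62092318 * v ^ 2 - 84672000) * Real.cos (5 * v)
      + 42336000 * Real.cos (6 * v))
    / (103219200 * v ^ 2 * (Real.sin (v / 2)) ^ 10)

/-- The variable coefficient `b₆(v)` of the phase-fitted method PF-D0. -/
noncomputable def pfb6 (v : ℝ) : ℝ :=
  (((-171873114) * Real.cos v + 171835152 * Real.cos (2 * v)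
        - 257184477 * Real.cos (3 * v) + 103937264 * Real.cos (4 * v)
        - 75329225 * Real.cos (5 * v)) * v ^ 2
      + 50803200 * (Real.cos (3 * v) - 2 * Real.cos (4 * v)
        + 2 * Real.cos (5 * v) - Real.cos (6 * v)))
    / (103219200 * v ^ 2 * (Real.sin (v / 2)) ^ 10)
open Asymptotics in
/-- The Taylor remainder of the real cosine at `0`. -/
theorem cos_sub_taylor_isBigO (n : ℕ) (hn : 0 < n) :
    (fun x : ℝ => Real.cos x - ∑ i ∈ Finset.range n, (-1) ^ i * x ^ (2 * i) / (2 * i).factorial)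
      =O[nhds 0] fun x : ℝ => x ^ (2 * n) := by
  have re_sum (x : ℝ) :
      (∑ m ∈ Finset.range (2 * n), ((x : ℂ) * Complex.I) ^ m / m.factorial).re
        = ∑ i ∈ Finset.range n, (-1) ^ i * x ^ (2 * i) / (2 * i).factorial := by
    clear hn
    induction n with
    | zero => simp
    | succ n ih =>
      have even_term : ((x : ℂ) * Complex.I) ^ (2 * n) / (2 * n).factorial
          = (((-1) ^ n * x ^ (2 * n) / (2 * n).factorial : ℝ) : ℂ) := by
        rw [mul_pow, pow_mul Complex.I, Complex.I_sq]
        push_cast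
        ring
      have odd_term : ((x : ℂ) * Complex.I) ^ (2 * n + 1) / (2 * n + 1).factorial
          = (((-1) ^ n * x ^ (2 * n + 1) / (2 * n + 1).factorial : ℝ) : ℂ) * Complex.I := by
        rw [mul_pow, pow_succ Complex.I, pow_mul Complex.I, Complex.I_sq]
        push_cast
        ring
      rw [show 2 * (n + 1) = 2 * n + 1 + 1 by ring, Finset.sum_range_succ, Finset.sum_range_succ,
        Finset.sum_range_succ, even_term, odd_term, Complex.add_re, Complex.add_re, ih,
        Complex.ofReal_re, Complex.re_ofReal_mul, Complex.I_re, mul_zero, add_zero]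
  refine IsBigO.of_bound
    (((2 * n).succ : ℝ) * (((2 * n).factorial : ℝ) * ((2 * n : ℕ) : ℝ))⁻¹) ?_
  filter_upwards [Metric.closedBall_mem_nhds (0 : ℝ) one_pos] with x hx
  have norm_eq : ‖(x : ℂ) * Complex.I‖ = ‖x‖ := by simp
  have hx1 : ‖(x : ℂ) * Complex.I‖ ≤ 1 := by
    rw [norm_eq]
    simpa using hx
  have bound := Complex.exp_bound hx1 (n := 2 * n) (by lia)
  rw [norm_eq] at bound
  rw [← re_sum, ← Complex.exp_ofReal_mul_I_re, ← Complex.sub_re, norm_pow,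
    mul_comm (_ * _)]
  exact (Complex.abs_re_le_norm _).trans bound

/-- The tenth power of the sine of a half angle as a cosine polynomial. -/
theorem sin_half_pow_ten (v : ℝ) :
    Real.sin (v / 2) ^ 10 = (126 - 210 * Real.cos v + 120 * Real.cos (2 * v)
      - 45 * Real.cos (3 * v) + 10 * Real.cos (4 * v) - Real.cos (5 * v)) / 512 := by
  have half : Real.sin (v / 2) ^ 2 = (1 - Real.cos v) / 2 := by
    rw [Real.sin_sq_eq_half_sub, mul_div_cancel₀ v two_ne_zero]
    ring
  have cos_four : Real.cos (4 * v) = 2 * Real.cos (2 * v) ^ 2 - 1 := by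
    rw [← Real.cos_two_mul]
    ring_nf
  have cos_five : Real.cos (5 * v)
      = 2 * Real.cos (4 * v) * Real.cos v - Real.cos (3 * v) := by
    rw [show 5 * v = 4 * v + v by ring, show 3 * v = 4 * v - v by ring, Real.cos_add,
      Real.cos_sub]
    ring
  rw [cos_five, cos_four, Real.cos_three_mul, Real.cos_two_mul,
    show Real.sin (v / 2) ^ 10 = (Real.sin (v / 2) ^ 2) ^ 5 by ring, half]
  ring

/-- The numerator of `pfb3`. -/
noncomputable def pfb3Num (v : ℝ) : ℝ :=
  ((-367257540) * Real.cos v + 183567900 * Real.cos (2 * v)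
        - 16708985 * Real.cos (4 * v) + 24862148 * Real.cos (5 * v)) * v ^ 2
      + 81 * (3175117 * v ^ 2 - 224000 * Real.cos (3 * v) + 448000 * Real.cos (4 * v)
        - 448000 * Real.cos (5 * v) + 224000 * Real.cos (6 * v))

/-- The denominator of `pfb3`. -/
noncomputable def pfb3Den (v : ℝ) : ℝ :=
  206438400 * v ^ 2 * Real.sin (v / 2) ^ 10

open Asymptotics in
theorem pfb3Num_sub_isBigO :
    (fun v : ℝ => pfb3Num v
        - (270875723 / 17740800 + -16301796103 / 6457651200 * v ^ 2) * pfb3Den v)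
      =O[nhds 0] fun v : ℝ => v ^ 16 := by
  let T : ℝ → ℝ := fun x => ∑ i ∈ Finset.range 8, (-1) ^ i * x ^ (2 * i) / (2 * i).factorial
  have remainder (k : ℝ) {p : ℝ → ℝ} (hp : Continuous p) :
      (fun v => p v * (Real.cos (k * v) - T (k * v))) =O[nhds 0] fun v : ℝ => v ^ 16 := by
    have lim : Tendsto (fun v : ℝ => k * v) (nhds 0) (nhds 0) := by
      simpa using (continuous_const_mul k).tendsto 0
    have scaled : (fun v : ℝ => (k * v) ^ 16) =O[nhds 0] fun v : ℝ => v ^ 16 := by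
      simp_rw [mul_pow]
      exact isBigO_const_mul_self _ _ _
    have rem : (fun v : ℝ => Real.cos (k * v) - T (k * v)) =O[nhds 0] fun v : ℝ => v ^ 16 :=
      ((cos_sub_taylor_isBigO 8 (by norm_num)).comp_tendsto lim).trans scaled
    simpa using ((hp.tendsto 0).isBigO_one ℝ).mul rem
  have poly {q : ℝ → ℝ} (hq : Continuous q) :
      (fun v => q v * v ^ 16) =O[nhds 0] fun v : ℝ => v ^ 16 := by
    simpa using ((hq.tendsto 0).isBigO_one ℝ).mul
      (isBigO_refl (fun v : ℝ => v ^ 16) (nhds 0))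
  -- `w v` is the factor multiplying the cosine polynomial from `sin_half_pow_ten`.
  let w : ℝ → ℝ := fun v =>
    (270875723 / 17740800 + -16301796103 / 6457651200 * v ^ 2) * (403200 * v ^ 2)
  have expansion := ((((((remainder 1 (p := fun v => -367257540 * v ^ 2 + 210 * w v)
      (by fun_prop)).add
    (remainder 2 (p := fun v => 183567900 * v ^ 2 - 120 * w v) (by fun_prop))).add
    (remainder 3 (p := fun v => -18144000 + 45 * w v) (by fun_prop))).add
    (remainder 4 (p := fun v => -16708985 * v ^ 2 + 36288000 - 10 * w v) (by fun_prop))).add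
    (remainder 5 (p := fun v => 24862148 * v ^ 2 - 36288000 + w v) (by fun_prop))).add
    (remainder 6 (p := fun _ => 18144000) (by fun_prop))).add
    (poly (q := fun v => -276473645295 / 128128 + 16301796103 / 384384 * v ^ 2) (by fun_prop))
  refine expansion.congr_left fun v => ?_
  simp only [pfb3Num, pfb3Den, sin_half_pow_ten, T, w, Finset.sum_range_succ,
    Finset.sum_range_zero, Nat.factorial, one_mul]
  push_cast
  ring

theorem pfb3Den_div_tendsto :
    Tendsto (fun v : ℝ => pfb3Den v / v ^ 12) (nhdsWithin 0 (Set.Ioi 0)) (nhds 201600) := by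
  have deriv_sin : HasDerivAt (fun v : ℝ => Real.sin (v / 2)) (1 / 2) 0 := by
    simpa using ((hasDerivAt_id (0 : ℝ)).div_const 2).sin
  have slope := (hasDerivAt_iff_tendsto_slope.mp deriv_sin).mono_left
    (nhdsWithin_mono 0 fun v (hv : 0 < v) => hv.ne')
  have scaled := (slope.pow 10).const_mul 206438400
  rw [show (206438400 : ℝ) * (1 / 2) ^ 10 = 201600 by norm_num] at scaled
  refine scaled.congr' ?_
  filter_upwards [self_mem_nhdsWithin] with v hv
  have hv0 : v ≠ 0 := ne_of_gt hv
  simp only [slope_def_field, pfb3Den, zero_div, Real.sin_zero, sub_zero]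
  field_simp

theorem pfb3_sub_div_tendsto :
    Tendsto (fun v : ℝ => (pfb3 v - (270875723 / 17740800)) / v ^ 2)
      (nhdsWithin 0 (Set.Ioi 0)) (nhds (-16301796103 / 6457651200)) := by
  have num_lim : Tendsto (fun v : ℝ => (pfb3Num v
        - (270875723 / 17740800 + -16301796103 / 6457651200 * v ^ 2) * pfb3Den v) / v ^ 14)
      (nhdsWithin 0 (Set.Ioi 0)) (nhds 0) :=
    ((pfb3Num_sub_isBigO.trans_isLittleO
      (Asymptotics.isLittleO_pow_pow (by norm_num : 14 < 16))).mono
        nhdsWithin_le_nhds).tendsto_div_nhds_zero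
  have quot := (num_lim.div pfb3Den_div_tendsto (by norm_num)).const_add
    (-16301796103 / 6457651200 : ℝ)
  rw [zero_div, add_zero] at quot
  refine quot.congr' ?_
  filter_upwards [self_mem_nhdsWithin,
    pfb3Den_div_tendsto.eventually_ne (by norm_num : (201600 : ℝ) ≠ 0)] with v hv hden
  have hv0 : v ≠ 0 := ne_of_gt hv
  have hden0 : pfb3Den v ≠ 0 := fun h => hden (by simp [h])
  rw [show pfb3 v = pfb3Num v / pfb3Den v from rfl, Pi.div_apply]
  field_simp
  ring

/-- The PF-D0 coefficient `pfb3` tends to the corresponding classical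
Quinlan–Tremaine coefficient as `v → 0⁺`, with the stated `v²`-Taylor coefficient. -/
theorem pfd0_b3_limit :
    Tendsto pfb3 (nhdsWithin 0 (Set.Ioi 0)) (nhds (270875723 / 17740800)) ∧
    Tendsto (fun v : ℝ => (pfb3 v - (270875723 / 17740800)) / v ^ 2)
      (nhdsWithin 0 (Set.Ioi 0)) (nhds (-16301796103 / 6457651200)) := by
  refine ⟨?_, pfb3_sub_div_tendsto⟩
  have sq_lim : Tendsto (fun v : ℝ => v ^ 2) (nhdsWithin 0 (Set.Ioi 0)) (nhds 0) := by
    simpa using ((continuous_pow 2).tendsto (0 : ℝ)).mono_left nhdsWithin_le_nhds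
  have lim := (pfb3_sub_div_tendsto.mul sq_lim).add_const (270875723 / 17740800 : ℝ)
  rw [mul_zero, zero_add] at lim
  refine lim.congr' ?_
  filter_upwards [self_mem_nhdsWithin] with v hv
  have hv0 : v ≠ 0 := ne_of_gt hv
  field_simp
  ring
end

section
/- The PF-D1 coefficient function c1 satisfies lim_{v→0⁺} c1(v) = 90987349/53222400 and lim_{v→0⁺} (c1(v) − 90987349/53222400)/v² = −16301796103/145297152000; in particular c1 tends to the corresponding coefficient of the classical Quinlan–Tremaine method as v → 0, and its v²-Taylor coefficient is twice that of the PF-D0 coefficient b1. -/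
open Filter

/-- The variable coefficient `c₁(v)` of the method PF-D1 (phase lag and its first
derivative vanish at frequency `v`). -/
noncomputable def pfd1c1 (v : ℝ) : ℝ :=
  (53760 * (2 * Real.cos v + 2 * Real.cos (2 * v) + 2 * Real.cos (3 * v)
        + 2 * Real.cos (5 * v) + 1) * (Real.sin (v / 2)) ^ 3
      + v * ((304823 * Real.cos (v / 2) - 828603 * Real.cos (3 * v / 2)
          + 554639 * Real.cos (5 * v / 2) - 272779 * Real.cos (7 * v / 2)) * v ^ 2
        + 6720 * (7 * Real.cos (5 * v / 2) - 15 * Real.cos (7 * v / 2)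
          + 2 * (9 * Real.cos (9 * v / 2) - 6 * Real.cos (11 * v / 2)
            + Real.cos (13 * v / 2)))))
    / (6881280 * v ^ 3 * (Real.sin (v / 2)) ^ 10 * Real.cos (v / 2))

open Asymptotics Topology Finset

/-- The sum of the first `n` terms of the cosine series. -/
noncomputable def cosTaylor (n : ℕ) (t : ℝ) : ℝ :=
  ∑ j ∈ range n, (-1) ^ j * t ^ (2 * j) / (2 * j).factorial

/-- The sum of the first `n` terms of the sine series. -/
noncomputable def sinTaylor (n : ℕ) (t : ℝ) : ℝ :=
  ∑ j ∈ range n, (-1) ^ j * t ^ (2 * j + 1) / (2 * j + 1).factorial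

theorem sum_range_mul_I_pow_div_factorial (n : ℕ) (t : ℝ) :
    ∑ i ∈ range (2 * n), ((t : ℂ) * Complex.I) ^ i / (i.factorial : ℂ) =
      (cosTaylor n t : ℂ) + (sinTaylor n t : ℂ) * Complex.I := by
  induction n with
  | zero => simp [cosTaylor, sinTaylor]
  | succ n ih =>
    have hI : Complex.I ^ (2 * n) = (-1) ^ n := by rw [pow_mul, Complex.I_sq]
    rw [show 2 * (n + 1) = 2 * n + 1 + 1 by ring, sum_range_succ, sum_range_succ, ih]
    simp only [cosTaylor, sinTaylor, sum_range_succ _ n]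
    push_cast
    rw [mul_pow, mul_pow, pow_succ Complex.I, hI]
    ring

theorem exp_mul_I_sub_taylor_isBigO (n : ℕ) :
    (fun t : ℝ => ((Real.cos t - cosTaylor n t : ℝ) : ℂ)
        + ((Real.sin t - sinTaylor n t : ℝ) : ℂ) * Complex.I)
      =O[𝓝 0] (fun t : ℝ => t ^ (2 * n)) := by
  have hlim : Tendsto (fun t : ℝ => (t : ℂ) * Complex.I) (𝓝 0) (𝓝 0) := by
    have : Continuous fun t : ℝ => (t : ℂ) * Complex.I := by fun_prop
    simpa using this.tendsto 0
  have hexp := (Complex.exp_sub_sum_range_isBigO_pow (2 * n)).comp_tendsto hlim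
  refine (hexp.trans (IsBigO.of_bound 1 (Eventually.of_forall fun t => by simp))).congr_left
    fun t => ?_
  rw [Function.comp_apply, sum_range_mul_I_pow_div_factorial, Complex.exp_mul_I]
  push_cast
  ring

theorem cos_sub_cosTaylor_isBigO (n : ℕ) :
    (fun t : ℝ => Real.cos t - cosTaylor n t) =O[𝓝 0] (fun t : ℝ => t ^ (2 * n)) := by
  refine IsBigO.trans (IsBigO.of_bound 1 (Eventually.of_forall fun t => ?_))
    (exp_mul_I_sub_taylor_isBigO n)
  rw [one_mul, Real.norm_eq_abs]
  simpa only [Complex.add_re, Complex.ofReal_re, Complex.re_ofReal_mul,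
    Complex.I_re, mul_zero, add_zero] using Complex.abs_re_le_norm
      (((Real.cos t - cosTaylor n t : ℝ) : ℂ)
        + ((Real.sin t - sinTaylor n t : ℝ) : ℂ) * Complex.I)

theorem sin_sub_sinTaylor_isBigO (n : ℕ) :
    (fun t : ℝ => Real.sin t - sinTaylor n t) =O[𝓝 0] (fun t : ℝ => t ^ (2 * n)) := by
  refine IsBigO.trans (IsBigO.of_bound 1 (Eventually.of_forall fun t => ?_))
    (exp_mul_I_sub_taylor_isBigO n)
  rw [one_mul, Real.norm_eq_abs]
  simpa only [Complex.add_im, Complex.ofReal_im, Complex.im_ofReal_mul,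
    Complex.I_im, mul_one, zero_add] using Complex.abs_im_le_norm
      (((Real.cos t - cosTaylor n t : ℝ) : ℂ)
        + ((Real.sin t - sinTaylor n t : ℝ) : ℂ) * Complex.I)

/-- An order-`n` bound at the origin persists under rescaling of the argument. -/
theorem isBigO_pow_comp_const_mul {f : ℝ → ℝ} {n : ℕ}
    (hf : f =O[𝓝 0] (fun t : ℝ => t ^ n)) (a : ℝ) :
    (fun v : ℝ => f (a * v)) =O[𝓝 0] (fun v : ℝ => v ^ n) := by
  have hlim : Tendsto (fun v : ℝ => a * v) (𝓝 0) (𝓝 0) := by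
    simpa using (continuous_const_mul a).tendsto 0
  refine (hf.comp_tendsto hlim).trans ?_
  simp only [Function.comp_def, mul_pow]
  exact (isBigO_refl _ _).const_mul_left _

/-- Linearization of the trigonometric product in the numerator. -/
theorem four_mul_cos_sum_mul_sin_cube (x : ℝ) :
    4 * ((2 * Real.cos (2 * x) + 2 * Real.cos (4 * x) + 2 * Real.cos (6 * x)
        + 2 * Real.cos (10 * x) + 1) * Real.sin x ^ 3) =
      -Real.sin (5 * x) + 3 * Real.sin (7 * x) - 4 * Real.sin (9 * x)
        + 3 * Real.sin (11 * x) - Real.sin (13 * x) := by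
  have product (a b c d : ℝ) (hc : c = a + b) (hd : d = b - a) :
      2 * Real.sin (a * x) * Real.cos (b * x) = Real.sin (c * x) - Real.sin (d * x) := by
    rw [Real.two_mul_sin_mul_cos, hc, hd, show (b - a) * x = -(a * x - b * x) by ring,
      Real.sin_neg, add_mul]
    ring
  have h12 := product 1 2 3 1 (by norm_num) (by norm_num)
  have h14 := product 1 4 5 3 (by norm_num) (by norm_num)
  have h16 := product 1 6 7 5 (by norm_num) (by norm_num)
  have h110 := product 1 10 11 9 (by norm_num) (by norm_num)
  have h32 := product 3 2 5 (-1) (by norm_num) (by norm_num)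
  have h34 := product 3 4 7 1 (by norm_num) (by norm_num)
  have h36 := product 3 6 9 3 (by norm_num) (by norm_num)
  have h310 := product 3 10 13 7 (by norm_num) (by norm_num)
  simp only [neg_one_mul, one_mul, Real.sin_neg] at h12 h14 h16 h110 h32 h34
  linear_combination 3 * (h12 + h14 + h16 + h110) - (h32 + h34 + h36 + h310)
    + (2 * Real.cos (2 * x) + 2 * Real.cos (4 * x) + 2 * Real.cos (6 * x)
        + 2 * Real.cos (10 * x) + 1) * Real.sin_three_mul x

/-- Linearization of the trigonometric product in the denominator. -/
theorem sin_pow_ten_mul_cos (x : ℝ) :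
    1024 * (Real.sin x ^ 10 * Real.cos x) =
      42 * Real.cos x - 90 * Real.cos (3 * x) + 75 * Real.cos (5 * x)
        - 35 * Real.cos (7 * x) + 9 * Real.cos (9 * x) - Real.cos (11 * x) := by
  have step (k a b : ℝ) (ha : a = k + 2) (hb : b = k - 2) :
      4 * Real.sin x ^ 2 * Real.cos (k * x) =
        2 * Real.cos (k * x) - Real.cos (a * x) - Real.cos (b * x) := by
    rw [ha, hb, add_mul, sub_mul, Real.cos_add, Real.cos_sub, Real.cos_two_mul, Real.cos_sq']
    ring
  have h1 := step 1 3 (-1) (by norm_num) (by norm_num)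
  have h3 := step 3 5 1 (by norm_num) (by norm_num)
  have h5 := step 5 7 3 (by norm_num) (by norm_num)
  have h7 := step 7 9 5 (by norm_num) (by norm_num)
  have h9 := step 9 11 7 (by norm_num) (by norm_num)
  simp only [neg_one_mul, one_mul, Real.cos_neg] at h1 h3
  linear_combination 256 * Real.sin x ^ 8 * h1 + 64 * Real.sin x ^ 6 * (h1 - h3)
    + 16 * Real.sin x ^ 4 * (2 * h1 - 3 * h3 + h5)
    + 4 * Real.sin x ^ 2 * (5 * h1 - 9 * h3 + 5 * h5 - h7)
    + (14 * h1 - 28 * h3 + 20 * h5 - 7 * h7 + h9)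

/-- The numerator of `pfd1c1`, with its trigonometric product linearized. -/
noncomputable def pfd1c1Num (v : ℝ) : ℝ :=
  13440 * (-Real.sin (5 / 2 * v) + 3 * Real.sin (7 / 2 * v) - 4 * Real.sin (9 / 2 * v)
      + 3 * Real.sin (11 / 2 * v) - Real.sin (13 / 2 * v))
    + v ^ 3 * (304823 * Real.cos (1 / 2 * v) - 828603 * Real.cos (3 / 2 * v)
      + 554639 * Real.cos (5 / 2 * v) - 272779 * Real.cos (7 / 2 * v))
    + v * (6720 * (7 * Real.cos (5 / 2 * v) - 15 * Real.cos (7 / 2 * v)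
      + 18 * Real.cos (9 / 2 * v) - 12 * Real.cos (11 / 2 * v) + 2 * Real.cos (13 / 2 * v)))

/-- The denominator of `pfd1c1`, with its trigonometric product linearized. -/
noncomputable def pfd1c1Den (v : ℝ) : ℝ :=
  v ^ 3 * (6720 * (42 * Real.cos (1 / 2 * v) - 90 * Real.cos (3 / 2 * v)
    + 75 * Real.cos (5 / 2 * v) - 35 * Real.cos (7 / 2 * v) + 9 * Real.cos (9 / 2 * v)
    - Real.cos (11 / 2 * v)))

theorem pfd1c1_eq_num_div_den (v : ℝ) : pfd1c1 v = pfd1c1Num v / pfd1c1Den v := by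
  have hn := four_mul_cos_sum_mul_sin_cube (1 / 2 * v)
  have hd := sin_pow_ten_mul_cos (1 / 2 * v)
  rw [pfd1c1, pfd1c1Num, pfd1c1Den]
  congr 1
  · ring_nf at hn ⊢
    linear_combination 13440 * hn
  · ring_nf at hd ⊢
    linear_combination 6720 * v ^ 3 * hd

theorem pow_isBigO_one (k : ℕ) : (fun v : ℝ => v ^ k) =O[𝓝 0] (fun _ => (1 : ℝ)) :=
  (continuous_pow k).continuousAt.isBigO_one ℝ

/-- The Taylor expansion of the numerator at the origin. -/
theorem pfd1c1Num_isBigO :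
    (fun v => pfd1c1Num v - (90987349 / 7920 * v ^ 13 - 201132451249 / 28828800 * v ^ 15))
      =O[𝓝 0] (fun v : ℝ => v ^ 16) := by
  have hc := isBigO_pow_comp_const_mul (cos_sub_cosTaylor_isBigO 8)
  have hs := isBigO_pow_comp_const_mul (sin_sub_sinTaylor_isBigO 8)
  have h0 := (((((hs (5 / 2)).const_mul_left (-1)).add ((hs (7 / 2)).const_mul_left 3)).add
    ((hs (9 / 2)).const_mul_left (-4))).add ((hs (11 / 2)).const_mul_left 3)).add
    ((hs (13 / 2)).const_mul_left (-1))
  have h3 := (((((hc (1 / 2)).const_mul_left 304823)).add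
    ((hc (3 / 2)).const_mul_left (-828603))).add ((hc (5 / 2)).const_mul_left 554639)).add
    ((hc (7 / 2)).const_mul_left (-272779))
  have h1 := (((((hc (5 / 2)).const_mul_left 7).add ((hc (7 / 2)).const_mul_left (-15))).add
    ((hc (9 / 2)).const_mul_left 18)).add ((hc (11 / 2)).const_mul_left (-12))).add
    ((hc (13 / 2)).const_mul_left 2)
  have hsum := ((h0.const_mul_left 13440).add
    (((pow_isBigO_one 3).mul h3).congr_right fun _ => one_mul _)).add
    (((pow_isBigO_one 1).mul (h1.const_mul_left 6720)).congr_right fun _ => one_mul _)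
  refine (hsum.add ((isLittleO_pow_pow (by norm_num : 16 < 17)).isBigO.const_mul_left
    (500506302271 / 3936092160))).congr_left fun v => ?_
  simp only [pfd1c1Num, cosTaylor, sinTaylor, sum_range_succ, range_zero, sum_empty,
    Nat.factorial]
  push_cast
  ring

/-- The Taylor expansion of the denominator at the origin. -/
theorem pfd1c1Den_isBigO :
    (fun v => pfd1c1Den v - (6720 * v ^ 13 - 3640 * v ^ 15))
      =O[𝓝 0] (fun v : ℝ => v ^ 16) := by
  have hc := isBigO_pow_comp_const_mul (cos_sub_cosTaylor_isBigO 8)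
  have h3 := ((((((hc (1 / 2)).const_mul_left 42).add ((hc (3 / 2)).const_mul_left (-90))).add
    ((hc (5 / 2)).const_mul_left 75)).add ((hc (7 / 2)).const_mul_left (-35))).add
    ((hc (9 / 2)).const_mul_left 9)).add ((hc (11 / 2)).const_mul_left (-1))
  have hsum := ((pow_isBigO_one 3).mul (h3.const_mul_left 6720)).congr_right fun _ => one_mul _
  refine (hsum.add ((isLittleO_pow_pow (by norm_num : 16 < 17)).isBigO.const_mul_left
    (1855 / 2))).congr_left fun v => ?_
  simp only [pfd1c1Den, cosTaylor, sum_range_succ, range_zero, sum_empty, Nat.factorial]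
  push_cast
  ring

/-- A function equal to `a v ^ 13 + b v ^ 15` up to order `16` has leading coefficient `a`. -/
theorem tendsto_div_pow_thirteen {f : ℝ → ℝ} {a b : ℝ}
    (hf : (fun v => f v - (a * v ^ 13 + b * v ^ 15)) =O[𝓝 0] (fun v : ℝ => v ^ 16)) :
    Tendsto (fun v => f v / v ^ 13) (𝓝[>] 0) (𝓝 a) := by
  have hrem : Tendsto (fun v => (f v - (a * v ^ 13 + b * v ^ 15)) / v ^ 13) (𝓝[>] 0) (𝓝 0) :=
    ((hf.trans_isLittleO (isLittleO_pow_pow (by norm_num))).tendsto_div_nhds_zero).mono_left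
      nhdsWithin_le_nhds
  have hmain : Tendsto (fun v : ℝ => a + b * v ^ 2) (𝓝[>] 0) (𝓝 a) := by
    have : Continuous fun v : ℝ => a + b * v ^ 2 := by fun_prop
    simpa using (this.tendsto 0).mono_left nhdsWithin_le_nhds
  refine (add_zero a ▸ hmain.add hrem).congr' ?_
  filter_upwards [self_mem_nhdsWithin] with v hv
  have : v ≠ 0 := ne_of_gt hv
  field_simp
  ring

/-- A function equal to `b v ^ 15` up to order `16` has leading coefficient `b`. -/
theorem tendsto_div_pow_fifteen {f : ℝ → ℝ} {b : ℝ}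
    (hf : (fun v => f v - b * v ^ 15) =O[𝓝 0] (fun v : ℝ => v ^ 16)) :
    Tendsto (fun v => f v / v ^ 15) (𝓝[>] 0) (𝓝 b) := by
  have hrem : Tendsto (fun v => (f v - b * v ^ 15) / v ^ 15) (𝓝[>] 0) (𝓝 0) :=
    ((hf.trans_isLittleO (isLittleO_pow_pow (by norm_num))).tendsto_div_nhds_zero).mono_left
      nhdsWithin_le_nhds
  refine (add_zero b ▸ hrem.const_add b).congr' ?_
  filter_upwards [self_mem_nhdsWithin] with v hv
  have : v ≠ 0 := ne_of_gt hv
  field_simp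
  ring

/-- The PF-D1 coefficient `c₁` tends to the classical Quinlan–Tremaine coefficient
as `v → 0⁺`, and its `v²`-Taylor coefficient is twice that of the PF-D0
coefficient `b₁`. -/
theorem pfd1_c1_limit :
    Tendsto pfd1c1 (nhdsWithin 0 (Set.Ioi 0)) (nhds (90987349 / 53222400)) ∧
    Tendsto (fun v : ℝ => (pfd1c1 v - 90987349 / 53222400) / v ^ 2)
      (nhdsWithin 0 (Set.Ioi 0)) (nhds (-16301796103 / 145297152000)) := by
  have hnum : Tendsto (fun v => pfd1c1Num v / v ^ 13) (𝓝[>] 0) (𝓝 (90987349 / 7920)) :=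
    tendsto_div_pow_thirteen (b := -201132451249 / 28828800)
      (pfd1c1Num_isBigO.congr_left fun v => by ring)
  have hden : Tendsto (fun v => pfd1c1Den v / v ^ 13) (𝓝[>] 0) (𝓝 6720) :=
    tendsto_div_pow_thirteen (b := -3640) (pfd1c1Den_isBigO.congr_left fun v => by ring)
  have hdiff : Tendsto (fun v => (pfd1c1Num v - 90987349 / 53222400 * pfd1c1Den v) / v ^ 15)
      (𝓝[>] 0) (𝓝 (6720 * (-16301796103 / 145297152000))) :=
    tendsto_div_pow_fifteen ((pfd1c1Num_isBigO.sub
      (pfd1c1Den_isBigO.const_mul_left (90987349 / 53222400))).congr_left fun v => by ring)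
  have hden_ne : ∀ᶠ v in 𝓝[>] (0 : ℝ), pfd1c1Den v / v ^ 13 ≠ 0 :=
    hden.eventually_ne (by norm_num)
  constructor
  · have h := hnum.div hden (by norm_num)
    rw [show (90987349 / 7920 / 6720 : ℝ) = 90987349 / 53222400 by norm_num] at h
    refine h.congr' ?_
    filter_upwards [self_mem_nhdsWithin] with v hv
    have : v ≠ 0 := ne_of_gt hv
    rw [Pi.div_apply, pfd1c1_eq_num_div_den, div_div_div_cancel_right₀ (pow_ne_zero 13 this)]
  · have h := hdiff.div hden (by norm_num)
    rw [mul_div_cancel_left₀ _ (by norm_num : (6720 : ℝ) ≠ 0)] at h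
    refine h.congr' ?_
    filter_upwards [self_mem_nhdsWithin, hden_ne] with v hv hne
    have : v ≠ 0 := ne_of_gt hv
    have hD : pfd1c1Den v ≠ 0 := fun h0 => hne (by rw [h0, zero_div])
    rw [Pi.div_apply, pfd1c1_eq_num_div_den]
    field_simp
end
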